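/- arXiv:1907.11669 — 3 statements merged into one kernel-verified Lean document; each statement's English description precedes it below -/
import Mathlib

section
/- Let n ≥ 3 and let x ∈ ℝ^E be a feasible solution to the subtour elimination LP on the complete graph K_n (i.e., 0 ≤ x_e ≤ 1 for every edge e, Σ_{e∈δ(v)} x_e = 2 for every vertex v, and Σ_{e∈δ(S)} x_e ≥ 2 for every vertex set S with ∅ ⊊ S ⊊ V). Then the aggregate weight of spanning trees of K_n satisfies Σ_{T∈𝒯_n} ∏_{e∈T} x_e ≥ n. -/
/-!
Build spanning trees greedily, one edge at a time. Let `F_k` be the total weight of the forests with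
exactly `k` edges. A forest `A` with `k ≤ n - 2` edges has at least `n - k ≥ 2` components, each of
which is a proper nonempty vertex set and hence has cut weight at least `2`. An edge joining two
different components lies in exactly two of these cuts, so the edges joining different components
of `A` have total weight at least `n - k` (`components_le_crossing_sum`). Adding such an edge to `A`
gives a forest with `k + 1` edges, and every forest with `k + 1` edges arises in at most `k + 1`
ways, so `(k + 1) F_{k+1} ≥ (n - k) F_k` (`forestWeight_step`). As `F_0 = 1`, this gives
`F_k ≥ n.choose k` for `k ≤ n - 1`. A forest with `n - 1` edges is a spanning tree, so the
tree weight is at least `n.choose (n - 1) = n`.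
-/

open scoped Classical

/-- `e` is an edge of the cut `δ(S)`: it has exactly one endpoint in `S`. -/
def InCut {n : ℕ} (S : Finset (Fin n)) (e : Sym2 (Fin n)) : Prop :=
  ∃ i j : Fin n, e = s(i, j) ∧ i ∈ S ∧ j ∉ S

/-- The total weight `Σ_{e ∈ δ(S)} x_e` of the cut determined by `S`. -/
noncomputable def cutSum {n : ℕ} (x : Sym2 (Fin n) → ℝ) (S : Finset (Fin n)) : ℝ :=
  ∑ e ∈ Finset.univ.filter (fun e => InCut S e), x e

/-- Feasibility for the subtour elimination LP on the complete graph `K_n`: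
`0 ≤ x_e ≤ 1` for every edge `e`, `x(δ(v)) = 2` for every vertex `v`, and
`x(δ(S)) ≥ 2` for every `S` with `∅ ⊊ S ⊊ V`. -/
def SubtourLPFeasible {n : ℕ} (x : Sym2 (Fin n) → ℝ) : Prop :=
  (∀ e : Sym2 (Fin n), ¬ e.IsDiag → 0 ≤ x e ∧ x e ≤ 1) ∧
  (∀ v : Fin n, cutSum x {v} = 2) ∧
  (∀ S : Finset (Fin n), S.Nonempty → S ≠ Finset.univ → 2 ≤ cutSum x S)

/-- `T` is (the edge set of) a spanning tree of the complete graph on `Fin n`. -/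
def IsSpanningTreeEdgeSet {n : ℕ} (T : Finset (Sym2 (Fin n))) : Prop :=
  (∀ e ∈ T, ¬ e.IsDiag) ∧
  (SimpleGraph.fromEdgeSet (↑T : Set (Sym2 (Fin n)))).IsTree

/-- The aggregate weight of spanning trees, `Σ_{T ∈ 𝒯_n} ∏_{e ∈ T} x_e`. -/
noncomputable def treeWeight {n : ℕ} (x : Sym2 (Fin n) → ℝ) : ℝ :=
  ∑ T ∈ Finset.univ.filter (fun T : Finset (Sym2 (Fin n)) => IsSpanningTreeEdgeSet T),
    ∏ e ∈ T, x e

/-- The graph on `Fin n` with edge set `A` (diagonal elements of `A` are ignored). -/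
abbrev graphOf {n : ℕ} (A : Finset (Sym2 (Fin n))) : SimpleGraph (Fin n) :=
  SimpleGraph.fromEdgeSet (↑A : Set (Sym2 (Fin n)))

/-- `A` is the edge set of a forest. -/
def IsForest {n : ℕ} (A : Finset (Sym2 (Fin n))) : Prop :=
  (∀ e ∈ A, ¬ e.IsDiag) ∧ (graphOf A).IsAcyclic

/-- The edge `e` joins two different connected components of `G`. -/
def Crossing {n : ℕ} (G : SimpleGraph (Fin n)) (e : Sym2 (Fin n)) : Prop :=
  ∃ i j : Fin n, e = s(i, j) ∧ ¬ G.Reachable i j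

lemma Crossing.not_isDiag {n : ℕ} {G : SimpleGraph (Fin n)} {e : Sym2 (Fin n)}
    (h : Crossing G e) : ¬ e.IsDiag := by
  obtain ⟨i, j, rfl, hr⟩ := h
  rw [Sym2.mk_isDiag_iff]
  rintro rfl
  exact hr (SimpleGraph.Reachable.refl _)

lemma Crossing.notMem {n : ℕ} {A : Finset (Sym2 (Fin n))} {e : Sym2 (Fin n)}
    (h : Crossing (graphOf A) e) : e ∉ A := by
  have hd := h.not_isDiag
  obtain ⟨i, j, rfl, hr⟩ := h
  intro hA
  refine hr (SimpleGraph.Adj.reachable ?_)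
  rw [SimpleGraph.fromEdgeSet_adj]
  exact ⟨hA, fun h => hd (Sym2.mk_isDiag_iff.2 h)⟩

lemma IsForest.insert_crossing {n : ℕ} {A : Finset (Sym2 (Fin n))} {e : Sym2 (Fin n)}
    (hA : IsForest A) (h : Crossing (graphOf A) e) : IsForest (insert e A) := by
  refine ⟨?_, ?_⟩
  · intro f hf
    rcases Finset.mem_insert.1 hf with rfl | hf
    · exact h.not_isDiag
    · exact hA.1 f hf
  · obtain ⟨i, j, rfl, hr⟩ := h
    have := SimpleGraph.IsAcyclic.sup_edge_of_not_reachable hr hA.2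
    convert this using 1
    ext a b
    simp only [SimpleGraph.fromEdgeSet_adj, SimpleGraph.sup_adj, SimpleGraph.edge_adj,
      Finset.coe_insert, Set.mem_insert_iff, Finset.mem_coe, Sym2.eq_iff]
    tauto

lemma edgeSet_graphOf {n : ℕ} {A : Finset (Sym2 (Fin n))} (h : ∀ e ∈ A, ¬ e.IsDiag) :
    (graphOf A).edgeSet = (↑A : Set (Sym2 (Fin n))) := by
  rw [SimpleGraph.edgeSet_fromEdgeSet]
  ext e
  simp only [Set.mem_sdiff, Finset.mem_coe]
  exact ⟨fun h => h.1, fun he => ⟨he, fun hd => h e he (by simpa using hd)⟩⟩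

/-- A forest extends to a spanning tree of the complete graph; if it already has `n - 1` edges,
the two coincide. -/
lemma IsForest.isSpanningTree {n : ℕ} [NeZero n] {A : Finset (Sym2 (Fin n))} (hA : IsForest A)
    (hc : A.card + 1 = n) : IsSpanningTreeEdgeSet A := by
  refine ⟨hA.1, ?_⟩
  obtain ⟨T, hAT, -, hT⟩ := (SimpleGraph.connected_top
    (V := Fin n)).exists_isTree_le_of_le_of_isAcyclic le_top hA.2
  have h1 := hT.card_edgeFinset
  have hsub : A ⊆ T.edgeFinset := by
    intro e he
    rw [SimpleGraph.mem_edgeFinset]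
    apply SimpleGraph.edgeSet_mono hAT
    rw [edgeSet_graphOf hA.1]
    exact he
  have heq : A = T.edgeFinset := Finset.eq_of_subset_of_card_le hsub (by
    rw [Fintype.card_fin] at h1; omega)
  have : graphOf A = T := by
    rw [← SimpleGraph.edgeSet_inj, edgeSet_graphOf hA.1, heq, SimpleGraph.coe_edgeFinset]
  change (graphOf A).IsTree
  rwa [this]

/-- A graph with at most `|A|` edges has at least `n - |A|` components, since joining
one component to each of the others by an edge makes the graph connected. -/
lemma card_le_card_add_components {n : ℕ} [NeZero n] (A : Finset (Sym2 (Fin n))) :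
    n ≤ A.card + Nat.card (graphOf A).ConnectedComponent := by
  set G := graphOf A with hG
  let r : G.ConnectedComponent → Fin n := fun c => c.out
  have hr : ∀ c, G.connectedComponentMk (r c) = c := fun c => Quot.out_eq c
  let c0 : G.ConnectedComponent := G.connectedComponentMk 0
  let N : Finset (Sym2 (Fin n)) := (Finset.univ.erase c0).image fun c => s(r c0, r c)
  have hle : G ≤ graphOf (A ∪ N) := SimpleGraph.fromEdgeSet_mono (by simp)
  have hreach : ∀ v, (graphOf (A ∪ N)).Reachable (r c0) v := by
    intro v
    have h1 : G.Reachable (r (G.connectedComponentMk v)) v :=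
      SimpleGraph.ConnectedComponent.exact (hr _)
    refine SimpleGraph.Reachable.trans ?_ (h1.mono hle)
    by_cases hc : G.connectedComponentMk v = c0
    · rw [hc]
    · refine SimpleGraph.Adj.reachable ?_
      rw [SimpleGraph.fromEdgeSet_adj]
      refine ⟨?_, ?_⟩
      · rw [Finset.mem_coe]
        exact Finset.mem_union_right _ (Finset.mem_image.2
          ⟨_, Finset.mem_erase.2 ⟨hc, Finset.mem_univ _⟩, rfl⟩)
      · intro h
        apply hc
        rw [← hr (G.connectedComponentMk v), ← h, hr]
  have hconn : (graphOf (A ∪ N)).Connected :=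
    ⟨fun u v => (hreach u).symm.trans (hreach v)⟩
  have h2 := hconn.card_vert_le_card_edgeSet_add_one
  have h3 : Nat.card (graphOf (A ∪ N)).edgeSet ≤ (A ∪ N).card := by
    rw [Nat.card_coe_set_eq, ← Set.ncard_coe_finset]
    apply Set.ncard_le_ncard _ (Finset.finite_toSet _)
    rw [SimpleGraph.edgeSet_fromEdgeSet]
    exact Set.sdiff_subset
  have h4 : (A ∪ N).card ≤ A.card + N.card := Finset.card_union_le _ _
  have h5 : N.card ≤ (Finset.univ.erase c0).card := Finset.card_image_le
  rw [Finset.card_erase_of_mem (Finset.mem_univ _), Finset.card_univ] at h5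
  have h6 : 0 < Fintype.card G.ConnectedComponent := Fintype.card_pos_iff.2 ⟨c0⟩
  rw [Nat.card_fin] at h2
  rw [Nat.card_eq_fintype_card (α := G.ConnectedComponent)]
  omega

/-- If `G` is disconnected, every component has cut weight at least `2`, and each edge counts in
at most two of these cuts, and only if it is a crossing edge. -/
lemma components_le_crossing_sum {n : ℕ} {x : Sym2 (Fin n) → ℝ} (hx : SubtourLPFeasible x)
    (G : SimpleGraph (Fin n)) (h2 : 2 ≤ Nat.card G.ConnectedComponent) :
    (Nat.card G.ConnectedComponent : ℝ) ≤
      ∑ e ∈ Finset.univ.filter (fun e => Crossing G e), x e := by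
  rw [Nat.card_eq_fintype_card] at h2 ⊢
  have hcut : ∀ c : G.ConnectedComponent, 2 ≤ cutSum x c.supp.toFinset := by
    intro c
    apply hx.2.2
    · rw [Set.toFinset_nonempty]
      exact c.nonempty_supp
    · intro hu
      obtain ⟨d, hd⟩ := Fintype.exists_ne_of_one_lt_card (by omega) c
      obtain ⟨v, hv⟩ := d.nonempty_supp
      have hvc : v ∈ c.supp.toFinset := hu ▸ Finset.mem_univ v
      rw [Set.mem_toFinset, SimpleGraph.ConnectedComponent.mem_supp_iff] at hvc
      rw [SimpleGraph.ConnectedComponent.mem_supp_iff] at hv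
      exact hd (hv.symm.trans hvc)
  have hsum : ∑ c : G.ConnectedComponent, cutSum x c.supp.toFinset ≤
      2 * ∑ e ∈ Finset.univ.filter (fun e => Crossing G e), x e := by
    simp only [cutSum, Finset.sum_filter]
    rw [Finset.sum_comm, Finset.mul_sum]
    apply Finset.sum_le_sum
    intro e _
    by_cases he : Crossing G e
    · have hpos := (hx.1 e he.not_isDiag).1
      rw [if_pos he, ← Finset.sum_filter, Finset.sum_const, nsmul_eq_mul]
      refine mul_le_mul_of_nonneg_right ?_ hpos
      obtain ⟨i, j, rfl, -⟩ := he
      have hsub : Finset.univ.filter (fun c : G.ConnectedComponent =>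
          InCut c.supp.toFinset s(i, j)) ⊆
          {G.connectedComponentMk i, G.connectedComponentMk j} := by
        intro c hc
        obtain ⟨a, b, hab, ha, -⟩ := (Finset.mem_filter.1 hc).2
        rw [Set.mem_toFinset, SimpleGraph.ConnectedComponent.mem_supp_iff] at ha
        rw [Finset.mem_insert, Finset.mem_singleton]
        rcases Sym2.eq_iff.1 hab with ⟨rfl, rfl⟩ | ⟨rfl, rfl⟩
        · exact Or.inl ha.symm
        · exact Or.inr ha.symm
      exact_mod_cast (Finset.card_le_card hsub).trans Finset.card_le_two
    · rw [if_neg he, mul_zero]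
      refine (Finset.sum_eq_zero fun c _ => if_neg ?_).le
      rintro ⟨a, b, rfl, ha, hb⟩
      refine he ⟨a, b, rfl, fun hab => hb ?_⟩
      rw [Set.mem_toFinset, SimpleGraph.ConnectedComponent.mem_supp_iff] at ha ⊢
      rw [← ha]
      exact (SimpleGraph.ConnectedComponent.sound hab).symm
  have hlow : ∑ _c : G.ConnectedComponent, (2 : ℝ) ≤
      ∑ c : G.ConnectedComponent, cutSum x c.supp.toFinset :=
    Finset.sum_le_sum fun c _ => hcut c
  rw [Finset.sum_const, Finset.card_univ, nsmul_eq_mul] at hlow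
  linarith

/-- The edge sets of forests with exactly `k` edges. -/
noncomputable def forests (n k : ℕ) : Finset (Finset (Sym2 (Fin n))) :=
  Finset.univ.filter fun A => IsForest A ∧ A.card = k

/-- The total weight of the forests with exactly `k` edges. -/
noncomputable def forestWeight {n : ℕ} (x : Sym2 (Fin n) → ℝ) (k : ℕ) : ℝ :=
  ∑ A ∈ forests n k, ∏ e ∈ A, x e

lemma mem_forests {n k : ℕ} {A : Finset (Sym2 (Fin n))} :
    A ∈ forests n k ↔ IsForest A ∧ A.card = k := by
  simp [forests]

/-- Both sides are related to the sum over pairs `(B, e)` of a forest `B` with `k + 1` edges and an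
edge `e ∈ B`, into which the pairs (forest `A` with `k` edges, crossing edge `e`) embed by
`(A, e) ↦ (insert e A, e)`. -/
lemma forestWeight_step {n : ℕ} [NeZero n] {x : Sym2 (Fin n) → ℝ} (hx : SubtourLPFeasible x)
    {k : ℕ} (hk : k + 2 ≤ n) :
    ((n : ℝ) - k) * forestWeight x k ≤ ((k : ℝ) + 1) * forestWeight x (k + 1) := by
  have hnn : ∀ m, ∀ A ∈ forests n m, 0 ≤ ∏ e ∈ A, x e := fun m A hA =>
    Finset.prod_nonneg fun e he => (hx.1 e ((mem_forests.1 hA).1.1 e he)).1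
  let P : Finset (Σ _ : Finset (Sym2 (Fin n)), Sym2 (Fin n)) :=
    (forests n k).sigma fun A => Finset.univ.filter fun e => Crossing (graphOf A) e
  let Q : Finset (Σ _ : Finset (Sym2 (Fin n)), Sym2 (Fin n)) :=
    (forests n (k + 1)).sigma fun B => B
  let φ : (Σ _ : Finset (Sym2 (Fin n)), Sym2 (Fin n)) →
      (Σ _ : Finset (Sym2 (Fin n)), Sym2 (Fin n)) := fun p => ⟨insert p.2 p.1, p.2⟩
  have hP : ∀ p ∈ P, IsForest p.1 ∧ p.1.card = k ∧ Crossing (graphOf p.1) p.2 := by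
    intro p hp
    obtain ⟨h1, h2⟩ := Finset.mem_sigma.1 hp
    exact ⟨(mem_forests.1 h1).1, (mem_forests.1 h1).2, (Finset.mem_filter.1 h2).2⟩
  have hinj : Set.InjOn φ P := by
    rintro ⟨A, e⟩ hp ⟨B, f⟩ hq h
    have h1 := (hP _ hp).2.2.notMem
    have h2 := (hP _ hq).2.2.notMem
    simp only [φ, Sigma.mk.injEq, heq_eq_eq] at h h1 h2
    obtain ⟨hAB, rfl⟩ := h
    rw [← Finset.erase_insert h1, hAB, Finset.erase_insert h2]
  have hsub : P.image φ ⊆ Q := by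
    intro q hq
    obtain ⟨p, hp, rfl⟩ := Finset.mem_image.1 hq
    obtain ⟨h1, h2, h3⟩ := hP p hp
    refine Finset.mem_sigma.2 ⟨mem_forests.2 ⟨h1.insert_crossing h3, ?_⟩,
      Finset.mem_insert_self _ _⟩
    rw [Finset.card_insert_of_notMem h3.notMem, h2]
  calc ((n : ℝ) - k) * forestWeight x k
      = ∑ A ∈ forests n k, (∏ e ∈ A, x e) * ((n : ℝ) - k) := by
        rw [forestWeight, ← Finset.sum_mul, mul_comm]
    _ ≤ ∑ A ∈ forests n k, (∏ e ∈ A, x e) *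
          ∑ e ∈ Finset.univ.filter (fun e => Crossing (graphOf A) e), x e := by
        refine Finset.sum_le_sum fun A hA => mul_le_mul_of_nonneg_left ?_ (hnn k A hA)
        have hc := card_le_card_add_components A
        rw [(mem_forests.1 hA).2] at hc
        refine le_trans ?_ (components_le_crossing_sum hx (graphOf A) (by omega))
        have : (n : ℝ) ≤ k + Nat.card (graphOf A).ConnectedComponent := by exact_mod_cast hc
        linarith
    _ = ∑ p ∈ P, ∏ e ∈ (φ p).1, x e := by
        rw [Finset.sum_sigma]
        refine Finset.sum_congr rfl fun A _ => ?_
        rw [Finset.mul_sum]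
        refine Finset.sum_congr rfl fun e he => ?_
        rw [Finset.prod_insert (Finset.mem_filter.1 he).2.notMem, mul_comm]
    _ = ∑ q ∈ P.image φ, ∏ e ∈ q.1, x e := by
        rw [Finset.sum_image hinj]
    _ ≤ ∑ q ∈ Q, ∏ e ∈ q.1, x e :=
        Finset.sum_le_sum_of_subset_of_nonneg hsub fun q hq _ =>
          hnn (k + 1) q.1 (Finset.mem_sigma.1 hq).1
    _ = ((k : ℝ) + 1) * forestWeight x (k + 1) := by
        rw [Finset.sum_sigma, forestWeight, Finset.mul_sum]
        refine Finset.sum_congr rfl fun B hB => ?_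
        dsimp only
        rw [Finset.sum_const, (mem_forests.1 hB).2, nsmul_eq_mul]
        push_cast
        rfl

lemma choose_le_forestWeight {n : ℕ} [NeZero n] {x : Sym2 (Fin n) → ℝ}
    (hx : SubtourLPFeasible x) (k : ℕ) (hk : k + 1 ≤ n) :
    (n.choose k : ℝ) ≤ forestWeight x k := by
  induction k with
  | zero =>
    have hmem : (∅ : Finset (Sym2 (Fin n))) ∈ forests n 0 := by
      refine mem_forests.2 ⟨⟨by simp, ?_⟩, rfl⟩
      simp [graphOf]
    have hforests : forests n 0 = {∅} := by
      refine Finset.eq_singleton_iff_unique_mem.2 ⟨hmem, fun A hA => ?_⟩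
      exact Finset.card_eq_zero.1 (mem_forests.1 hA).2
    simp [forestWeight, hforests]
  | succ k ih =>
    have h1 := ih (by omega)
    have h2 := forestWeight_step hx (k := k) (by omega)
    have h3 : (n.choose (k + 1) : ℝ) * (k + 1) = n.choose k * ((n : ℝ) - k) := by
      have := Nat.choose_succ_right_eq n k
      rw [← Nat.cast_sub (by omega : k ≤ n)]
      exact_mod_cast this
    have hkn : (0 : ℝ) ≤ (n : ℝ) - k := by
      have : (k : ℝ) ≤ n := by exact_mod_cast (by omega : k ≤ n)
      linarith
    have hpos : (0 : ℝ) < (k : ℝ) + 1 := by positivity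
    refine le_of_mul_le_mul_right ?_ hpos
    have := mul_le_mul_of_nonneg_left h1 hkn
    linarith

/-- Any feasible solution of the subtour elimination LP on `K_n` (`n ≥ 3`) has
aggregate spanning-tree weight at least `n`. -/
theorem subtourLP_implies_treeWeight_ge (n : ℕ) (hn : 3 ≤ n)
    (x : Sym2 (Fin n) → ℝ) (hx : SubtourLPFeasible x) :
    (n : ℝ) ≤ treeWeight x := by
  have : NeZero n := ⟨by omega⟩
  have h1 := choose_le_forestWeight hx (n - 1) (by omega)
  have h2 : n.choose (n - 1) = n := by
    rw [Nat.choose_symm (by omega : 1 ≤ n), Nat.choose_one_right]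
  rw [h2] at h1
  refine h1.trans (Finset.sum_le_sum_of_subset_of_nonneg ?_ ?_)
  · intro A hA
    obtain ⟨hF, hc⟩ := mem_forests.1 hA
    exact Finset.mem_filter.2 ⟨Finset.mem_univ _, hF.isSpanningTree (by omega)⟩
  · intro T hT _
    exact Finset.prod_nonneg fun e he => (hx.1 e ((Finset.mem_filter.1 hT).2.1 e he)).1
end

section
/- Let n ≥ 3 and let x ∈ ℝ^E be a feasible solution to the subtour elimination LP on the complete graph K_n. Let X be the n×n symmetric matrix with X_{ij} = X_{ji} = x_{{i,j}} for i ≠ j and X_{ii} = 0. Then det((2I − X)_{−1}) ≥ n, where (2I − X)_{−1} denotes the (n−1)×(n−1) matrix obtained from 2I − X by deleting its first row and first column. -/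
/-!
Let `M` be the Laplacian of a nonnegatively weighted graph with the row and column of one root
vertex deleted. In terms of `M` alone, the graph has nonnegative weights iff the off-diagonal
entries of `M` are `≤ 0` and its row sums (the weights of the root edges) are `≥ 0`; the weight of
the cut around a set `S` avoiding the root is `1_Sᵀ M 1_S`. `IsCutTwo` collects these conditions
with all cuts `≥ 2`, and `IsCutTwo.le_det` proves `det M ≥ n + 1` for `M` of size `n`, so for a
graph on `n + 1` vertices, by induction on `n`.

The weighted number of spanning trees `τ = det M` is homogeneous of degree `n` in the weights and
`∂τ/∂x_e = τ(G/e)`, hence `n τ(G) = ∑_e x_e τ(G/e)`; on matrices this is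
`tr (adj M * M) = n * det M`, where the coefficient of `x_e` is a combination of entries of `adj M`
that equals the determinant of the reduced Laplacian of `G/e`. Contraction keeps every cut `≥ 2`,
so `τ(G/e) ≥ n` by induction, and `∑_e x_e ≥ n + 1` because all `n + 1` degrees are `≥ 2`.
Therefore `n τ(G) ≥ n (n + 1)`.
-/

open scoped Classical

/-- The embedding `Fin (n-1) → Fin n` skipping the first index, used to delete
the first row and column of an `n × n` matrix. -/
def delFirst (n : ℕ) (hn : 0 < n) (i : Fin (n - 1)) : Fin n :=
  Fin.cast (Nat.succ_pred_eq_of_pos hn) i.succ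

open Matrix

/-- `M` is the reduced Laplacian (root row and column deleted) of a graph with nonnegative weights
in which every cut has weight at least `2`. Vertex sets avoiding the root are encoded by their
indicator vectors `u`; a cut has exactly one side avoiding the root, so all cuts are covered. -/
structure IsCutTwo {n : ℕ} (M : Matrix (Fin n) (Fin n) ℝ) : Prop where
  symm : ∀ i j, M i j = M j i
  offDiag : ∀ i j, i ≠ j → M i j ≤ 0
  rowSum : ∀ i, 0 ≤ ∑ j, M i j
  cut : ∀ u : Fin n → ℝ, (∀ i, u i = 0 ∨ u i = 1) → u ≠ 0 →
    2 ≤ ∑ i, ∑ j, u i * M i j * u j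

/-- The reduced Laplacian after contracting the edge between the non-root vertices `i` and
`i.succAbove k`; the merged vertex has index `k`. -/
def contractEdge {n : ℕ} (M : Matrix (Fin (n + 1)) (Fin (n + 1)) ℝ) (i : Fin (n + 1))
    (k : Fin n) : Matrix (Fin n) (Fin n) ℝ :=
  fun a b => M (i.succAbove a) (i.succAbove b) + (if a = k then M i (i.succAbove b) else 0)
    + (if b = k then M (i.succAbove a) i else 0) + (if a = k then if b = k then M i i else 0 else 0)

/-- Contracting the edge between the root and `i` deletes the row and column of `i`. -/
lemma IsCutTwo.deleteIndex {n : ℕ} {M : Matrix (Fin (n + 1)) (Fin (n + 1)) ℝ} (h : IsCutTwo M)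
    (i : Fin (n + 1)) : IsCutTwo (M.submatrix i.succAbove i.succAbove) where
  symm a b := h.symm _ _
  offDiag a b hab := h.offDiag _ _ (by simpa using hab)
  rowSum a := by
    have h1 := h.rowSum (i.succAbove a)
    rw [Fin.sum_univ_succAbove _ i] at h1
    have h2 := h.offDiag (i.succAbove a) i (Fin.succAbove_ne i a)
    simp only [submatrix_apply]
    linarith
  cut u hu hu0 := by
    have h1 := h.cut (i.insertNth 0 u) (fun j => by
      rcases Fin.eq_self_or_eq_succAbove i j with rfl | ⟨k, rfl⟩
      · simp
      · simpa using hu k) (fun h0 => hu0 (by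
        funext k
        simpa using congrFun h0 (i.succAbove k)))
    simpa [Fin.sum_univ_succAbove _ i] using h1

lemma IsCutTwo.contractEdge {n : ℕ} {M : Matrix (Fin (n + 1)) (Fin (n + 1)) ℝ} (h : IsCutTwo M)
    (i : Fin (n + 1)) (k : Fin n) : IsCutTwo (contractEdge M i k) where
  symm a b := by
    unfold _root_.contractEdge
    rw [h.symm (i.succAbove a) (i.succAbove b), h.symm i (i.succAbove b),
      h.symm (i.succAbove a) i]
    split_ifs <;> ring
  offDiag a b hab := by
    unfold _root_.contractEdge
    have h1 := h.offDiag (i.succAbove a) (i.succAbove b) (by simpa using hab)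
    have h2 := h.offDiag (i.succAbove a) i (Fin.succAbove_ne i a)
    have h3 := h.offDiag i (i.succAbove b) (Fin.succAbove_ne i b).symm
    split_ifs with ha hb
    · exact absurd (ha.trans hb.symm) hab
    all_goals linarith
  rowSum a := by
    have h1 := h.rowSum (i.succAbove a)
    have h2 := h.rowSum i
    rw [Fin.sum_univ_succAbove _ i] at h1 h2
    unfold _root_.contractEdge
    by_cases ha : a = k
    · simp [ha, Finset.sum_add_distrib] at h1 ⊢
      linarith
    · simp [ha, Finset.sum_add_distrib] at h1 ⊢
      linarith
  cut u hu hu0 := by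
    -- the preimage of the vertex set: `i` belongs to it exactly when `k` does
    have h1 := h.cut (i.insertNth (u k) u) (fun j => by
      rcases Fin.eq_self_or_eq_succAbove i j with rfl | ⟨k, rfl⟩
      · simpa using hu k
      · simpa using hu k) (fun h0 => hu0 (by
        funext k
        simpa using congrFun h0 (i.succAbove k)))
    refine h1.trans (le_of_eq ?_)
    unfold _root_.contractEdge
    simp only [Fin.sum_univ_succAbove _ i, Fin.insertNth_apply_same,
      Fin.insertNth_apply_succAbove, mul_add, add_mul, Finset.sum_add_distrib, mul_ite, ite_mul,
      mul_zero, zero_mul, Finset.sum_ite_eq', Finset.mem_univ, if_true]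
    have e1 : ∑ a, ∑ b, (if a = k then u a * M i (i.succAbove b) * u b else 0)
        = ∑ b, u k * M i (i.succAbove b) * u b := by
      rw [Finset.sum_comm]
      simp
    have e2 : ∑ a, ∑ b, (if a = k then if b = k then u a * M i i * u b else 0 else 0)
        = u k * M i i * u k := by
      rw [Finset.sum_comm]
      simp
    rw [e1, e2]
    ring

lemma adjugate_self_apply {n : ℕ} (M : Matrix (Fin (n + 1)) (Fin (n + 1)) ℝ) (i : Fin (n + 1)) :
    adjugate M i i = (M.submatrix i.succAbove i.succAbove).det := by
  rw [adjugate_fin_succ_eq_det_submatrix, Even.neg_one_pow ⟨_, rfl⟩, one_mul]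

/-- The derivative of `det M` in the weight of the edge `{i, i.succAbove k}` is the determinant of
the contraction: the unimodular congruence adding row and column `i` to row and column
`i.succAbove k` turns the edge vector into `e_i`, and then the `(i, i)` cofactor is taken. -/
lemma adjugate_edge {n : ℕ} (M : Matrix (Fin (n + 1)) (Fin (n + 1)) ℝ)
    (i : Fin (n + 1)) (k : Fin n) :
    adjugate M i i + adjugate M (i.succAbove k) (i.succAbove k) - adjugate M i (i.succAbove k)
      - adjugate M (i.succAbove k) i = (contractEdge M i k).det := by
  set j := i.succAbove k with hj
  have hji : j ≠ i := Fin.succAbove_ne i k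
  have hadj : ∀ a b : Fin (n + 1), a ≠ b →
      adjugate (transvection a b (1 : ℝ)) = transvection a b (-1) := by
    intro a b hab
    have h1 : transvection a b (1 : ℝ) * transvection a b (-1) = 1 := by
      rw [transvection_mul_transvection_same _ _ hab]
      simp
    calc adjugate (transvection a b (1 : ℝ))
        = adjugate (transvection a b (1 : ℝ)) *
            (transvection a b (1 : ℝ) * transvection a b (-1)) := by rw [h1, mul_one]
      _ = transvection a b (-1) := by
        rw [← mul_assoc, adjugate_mul, det_transvection_of_ne _ _ hab, one_smul, one_mul]
  have hsub : contractEdge M i k =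
      (transvection j i 1 * (M * transvection i j 1)).submatrix i.succAbove i.succAbove := by
    ext a b
    by_cases ha : a = k <;> by_cases hb : b = k
    all_goals
      simp [contractEdge, ha, hb, hj, transvection, add_mul, mul_add, single_mul_apply_of_ne,
        mul_single_apply_of_ne]
    all_goals try ring
  rw [hsub, ← adjugate_self_apply, adjugate_mul_distrib, adjugate_mul_distrib,
    hadj _ _ hji, hadj _ _ hji.symm]
  simp [transvection, add_mul, mul_add]
  ring

theorem IsCutTwo.le_det : ∀ {n : ℕ} {M : Matrix (Fin n) (Fin n) ℝ}, IsCutTwo M →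
    (n : ℝ) + 1 ≤ M.det
  | 0, M, _ => by simp
  | n + 1, M, h => by
    set A := adjugate M with hA
    have hdiag : ∀ i, (n : ℝ) + 1 ≤ A i i := fun i => by
      rw [hA, adjugate_self_apply]
      exact (h.deleteIndex i).le_det
    have hedge : ∀ i j, i ≠ j → (n : ℝ) + 1 ≤ A i i + A j j - A i j - A j i := fun i j hij => by
      rcases Fin.eq_self_or_eq_succAbove i j with rfl | ⟨k, rfl⟩
      · exact absurd rfl hij
      · rw [hA, adjugate_edge]
        exact (h.contractEdge i k).le_det
    have htr : ∑ i, ∑ j, A i j * M j i = ((n : ℝ) + 1) * M.det := by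
      have := congrArg trace (adjugate_mul M)
      simpa [trace, diag, mul_apply, mul_comm] using this
    -- Euler's identity, with each edge between non-root vertices counted twice at half weight
    have hid : ∑ i, ∑ j, A i j * M j i = ∑ i, (A i i * ∑ j, M i j)
        + ∑ i, ∑ j, (-M i j / 2) * (A i i + A j j - A i j - A j i) := by
      have e1 : ∑ i, ∑ j, M i j * A j j = ∑ i, ∑ j, M i j * A i i := by
        rw [Finset.sum_comm]
        exact Finset.sum_congr rfl fun i _ => Finset.sum_congr rfl fun j _ => by rw [h.symm j i]
      have e2 : ∑ i, ∑ j, M i j * A i j = ∑ i, ∑ j, M i j * A j i := by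
        rw [Finset.sum_comm]
        exact Finset.sum_congr rfl fun i _ => Finset.sum_congr rfl fun j _ => by rw [h.symm j i]
      have e3 : ∑ i, ∑ j, A i j * M j i = ∑ i, ∑ j, M i j * A i j :=
        Finset.sum_congr rfl fun i _ => Finset.sum_congr rfl fun j _ => by rw [h.symm j i, mul_comm]
      have e4 : ∑ i, (A i i * ∑ j, M i j) = ∑ i, ∑ j, M i j * A i i :=
        Finset.sum_congr rfl fun i _ => by
          rw [Finset.mul_sum]
          exact Finset.sum_congr rfl fun j _ => mul_comm _ _
      have e5 : ∑ i, ∑ j, (-M i j / 2) * (A i i + A j j - A i j - A j i)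
          = -(1 / 2) * (∑ i, ∑ j, M i j * A i i) - (1 / 2) * (∑ i, ∑ j, M i j * A j j)
            + (1 / 2) * (∑ i, ∑ j, M i j * A i j) + (1 / 2) * (∑ i, ∑ j, M i j * A j i) := by
        simp only [Finset.mul_sum, ← Finset.sum_add_distrib, ← Finset.sum_sub_distrib]
        exact Finset.sum_congr rfl fun i _ => Finset.sum_congr rfl fun j _ => by ring
      rw [e5, e4, e3, e1, ← e2]
      ring
    have hb1 : ∑ i, (((n : ℝ) + 1) * ∑ j, M i j) ≤ ∑ i, (A i i * ∑ j, M i j) :=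
      Finset.sum_le_sum fun i _ => mul_le_mul_of_nonneg_right (hdiag i) (h.rowSum i)
    -- the correction term on the diagonal makes the bound on the edge `{i, j}` hold for `i = j`
    have hb2 : ∑ i, ∑ j, ((-M i j / 2) * ((n : ℝ) + 1)
          + if i = j then (M i i / 2) * ((n : ℝ) + 1) else 0)
        ≤ ∑ i, ∑ j, (-M i j / 2) * (A i i + A j j - A i j - A j i) := by
      refine Finset.sum_le_sum fun i _ => Finset.sum_le_sum fun j _ => ?_
      by_cases hij : i = j
      · subst hij
        simp only [if_true]
        apply le_of_eq
        ring
      · rw [if_neg hij, add_zero]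
        exact mul_le_mul_of_nonneg_left (hedge i j hij) (by linarith [h.offDiag i j hij])
    have hroot : 2 ≤ ∑ i, ∑ j, M i j := by
      simpa using h.cut (fun _ => 1) (fun _ => Or.inr rfl) (fun h0 => by
        simpa using congrFun h0 0)
    have hdeg : ∀ i, 2 ≤ M i i := fun i => by
      have h1 := h.cut (Pi.single i 1) (fun j => by
        by_cases hj : j = i
        · subst hj; simp
        · simp [hj]) (by simp)
      simpa [Pi.single_apply] using h1
    have hdegs : 2 * ((n : ℝ) + 1) ≤ ∑ i, M i i := by
      have := Finset.sum_le_sum (s := Finset.univ) fun i _ => hdeg i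
      simp at this
      linarith
    have e6 : ∑ i, ∑ j, ((-M i j / 2) * ((n : ℝ) + 1)
          + if i = j then (M i i / 2) * ((n : ℝ) + 1) else 0)
        = ((n : ℝ) + 1) * (-(1 / 2) * (∑ i, ∑ j, M i j) + (1 / 2) * ∑ i, M i i) := by
      simp only [Finset.sum_add_distrib, Finset.sum_ite_eq, Finset.mem_univ, if_true, ← Finset.sum_mul,
        neg_div, Finset.sum_neg_distrib, ← Finset.sum_div]
      ring
    rw [← Finset.mul_sum] at hb1
    rw [e6] at hb2
    rw [hid] at htr
    have hn : (0 : ℝ) < (n : ℝ) + 1 := by positivity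
    have hfin : ((n : ℝ) + 1) * ((n : ℝ) + 1 + 1) ≤ ((n : ℝ) + 1) * M.det := by
      have : ((n : ℝ) + 1) * ((n : ℝ) + 1 + 1) ≤ ((n : ℝ) + 1) * ((∑ i, ∑ j, M i j)
          + (-(1 / 2) * (∑ i, ∑ j, M i j) + (1 / 2) * ∑ i, M i i)) :=
        mul_le_mul_of_nonneg_left (by linarith) hn.le
      linarith
    push_cast
    exact le_of_mul_le_mul_left hfin hn

lemma cutSum_eq {n : ℕ} (x : Sym2 (Fin n) → ℝ) (S : Finset (Fin n)) :
    cutSum x S = ∑ i ∈ S, ∑ j ∈ Sᶜ, x s(i, j) := by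
  rw [cutSum, ← Finset.sum_product']
  symm
  refine Finset.sum_bij (fun p _ => s(p.1, p.2)) ?_ ?_ ?_ ?_
  · rintro ⟨i, j⟩ hp
    simp only [Finset.mem_product, Finset.mem_compl] at hp
    simpa using ⟨i, j, rfl, hp.1, hp.2⟩
  · rintro ⟨i, j⟩ hp ⟨k, l⟩ hq hpq
    simp only [Finset.mem_product, Finset.mem_compl] at hp hq
    simp only [Sym2.eq_iff] at hpq
    rcases hpq with ⟨rfl, rfl⟩ | ⟨rfl, rfl⟩
    · rfl
    · exact absurd hp.1 hq.2
  · intro e he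
    obtain ⟨i, j, rfl, hi, hj⟩ := (Finset.mem_filter.1 he).2
    exact ⟨(i, j), by simp [hi, hj], rfl⟩
  · intros
    rfl

lemma rowSum_eq_two {n : ℕ} (x : Sym2 (Fin n) → ℝ) (hx : SubtourLPFeasible x)
    (X : Matrix (Fin n) (Fin n) ℝ)
    (hX : ∀ i j : Fin n, X i j = if i = j then 0 else x s(i, j)) (i : Fin n) :
    ∑ j, X i j = 2 := by
  rw [← hx.2.1 i, cutSum_eq, Finset.sum_singleton, ← Finset.sum_add_sum_compl {i},
    Finset.sum_singleton, hX i i, if_pos rfl, zero_add]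
  refine Finset.sum_congr rfl fun j hj => ?_
  rw [hX, if_neg]
  rintro rfl
  simp at hj

/-- The Laplacian quadratic form at the indicator vector of `S` is the weight of the cut `δ(S)`. -/
lemma quadForm_eq_cutSum {n : ℕ} (x : Sym2 (Fin n) → ℝ) (hx : SubtourLPFeasible x)
    (X : Matrix (Fin n) (Fin n) ℝ)
    (hX : ∀ i j : Fin n, X i j = if i = j then 0 else x s(i, j)) (S : Finset (Fin n)) :
    ∑ i ∈ S, ∑ j ∈ S, ((2 : ℝ) • (1 : Matrix (Fin n) (Fin n) ℝ) - X) i j = cutSum x S := by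
  rw [cutSum_eq]
  refine Finset.sum_congr rfl fun i hi => ?_
  have h1 : ∑ j ∈ Sᶜ, x s(i, j) = ∑ j ∈ Sᶜ, X i j :=
    Finset.sum_congr rfl fun j hj => by
      rw [hX, if_neg]
      rintro rfl
      exact (Finset.mem_compl.1 hj) hi
  have h2 := Finset.sum_add_sum_compl S (fun j => X i j)
  rw [rowSum_eq_two x hx X hX] at h2
  rw [h1]
  simp only [Matrix.sub_apply, Matrix.smul_apply, one_apply, smul_eq_mul, Finset.sum_sub_distrib]
  simp [hi]
  linarith

/-- For any feasible solution `x` of the subtour elimination LP on `K_n` (`n ≥ 3`),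
the associated symmetric matrix `X` satisfies the matrix-tree theorem constraint
`det((2I − X)_{−1}) ≥ n`. -/
theorem subtourLP_implies_matrixTree_det (n : ℕ) (hn : 3 ≤ n)
    (x : Sym2 (Fin n) → ℝ) (hx : SubtourLPFeasible x)
    (X : Matrix (Fin n) (Fin n) ℝ)
    (hX : ∀ i j : Fin n, X i j = if i = j then 0 else x s(i, j)) :
    (n : ℝ) ≤ (((2 : ℝ) • (1 : Matrix (Fin n) (Fin n) ℝ) - X).submatrix
      (delFirst n (by omega)) (delFirst n (by omega))).det := by
  obtain ⟨m, rfl⟩ : ∃ m, n = m + 1 := ⟨n - 1, by omega⟩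
  have hdel : delFirst (m + 1) (by omega) = (Fin.succ : Fin m → Fin (m + 1)) := by
    funext i
    rfl
  have hXnn : ∀ i j, 0 ≤ X i j := fun i j => by
    rw [hX]
    split_ifs with hij
    · exact le_rfl
    · exact (hx.1 _ (by simpa using hij)).1
  have key : IsCutTwo (((2 : ℝ) • (1 : Matrix (Fin (m + 1)) (Fin (m + 1)) ℝ) - X).submatrix
      (Fin.succ : Fin m → Fin (m + 1)) Fin.succ) := by
    refine ⟨fun i j => ?_, fun i j hij => ?_, fun i => ?_, fun u hu hu0 => ?_⟩
    · simp [hX, one_apply, eq_comm, Sym2.eq_swap]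
    · have := hXnn i.succ j.succ
      simpa [one_apply, hij] using this
    · have hrow := rowSum_eq_two x hx X hX i.succ
      rw [Fin.sum_univ_succ] at hrow
      have := hXnn i.succ 0
      simp [Finset.sum_sub_distrib, one_apply]
      linarith
    · set T : Finset (Fin m) := Finset.univ.filter fun i => u i = 1 with hT
      set S : Finset (Fin (m + 1)) := T.map (Fin.succEmb m) with hS
      have hcut := hx.2.2 S ?_ ?_
      · rw [← quadForm_eq_cutSum x hx X hX, hS] at hcut
        simp only [Finset.sum_map, hT, Finset.sum_filter] at hcut
        refine hcut.trans (le_of_eq ?_)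
        refine Finset.sum_congr rfl fun i _ => ?_
        rcases hu i with hi | hi
        · simp [hi]
        · simp only [hi, if_true, one_mul]
          refine Finset.sum_congr rfl fun j _ => ?_
          rcases hu j with hj | hj <;> simp [hj]
      · rw [hS, Finset.map_nonempty]
        obtain ⟨i, hi⟩ := Function.ne_iff.1 hu0
        exact ⟨i, by simpa [hT] using (hu i).resolve_left hi⟩
      · intro h0
        have : (0 : Fin (m + 1)) ∈ S := h0 ▸ Finset.mem_univ _
        simp [hS] at this
  have := key.le_det
  push_cast
  exact this
end

section
/- Let n ≥ 3 and let x ∈ ℚ^E be a vector of rational edge weights on the complete graph K_n that is feasible for the subtour elimination LP (i.e., 0 ≤ x_e ≤ 1 for every edge e, Σ_{e∈δ(v)} x_e = 2 for every vertex v, and Σ_{e∈δ(S)} x_e ≥ 2 for every vertex set S with ∅ ⊊ S ⊊ V). Then Σ_{T∈𝒯_n} ∏_{e∈T} x_e ≥ n. -/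
/-!
The statement is proved over `ℝ`, for weights on the complete graph on any finite vertex type `V`
all of whose degrees are at most `2` and all of whose cuts are at least `2` (`card_le_treeWt`), by
induction on `|V|`.

*Splitting off.* A vertex `v` is removed and its edges are replaced by new weights `y` between its
neighbours, where `y` has row sums at most `x_{iv}` and all cuts stay at least `2`
(`exists_splitting`). This is the fractional form of Lovász's splitting theorem: a `y` of maximal
total weight uses up all the weight at `v`, since otherwise posimodularity of the cut function
(`exists_splittable`) yields a pair of neighbours along which more can be split off.

*Counting trees.* Spanning trees correspond, for every choice of root, to parent functions
(`sum_treeSet`). Writing `G'` for the graph obtained by splitting off `v`, a tree of `G'` rooted at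
`ρ` in which each parent edge is marked as an old edge or as a `y`-edge becomes a tree rooted at `v`
when `ρ` and all vertices with a `y`-parent are redirected to `v`. As the `y`-parents of `i` have
total weight at most `x_{iv}`, this gives
`x_{ρv} τ(G') ≤ Σ_{T ∋ ρv} x^T` (`rooted_step`). Summing over `ρ` gives
`2 τ(G') ≤ Σ_T deg_T(v) x^T` (`degree_step`).

*Induction.* With `n = |V|`, the induction hypothesis gives `τ(G') ≥ n - 1` for each `v`. Summing
over `v` and using `Σ_v deg_T(v) = 2 (n - 1)` gives `2 n (n - 1) ≤ 2 (n - 1) τ(G)`, that is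
`τ(G) ≥ n`.
-/

open scoped Classical

/-- The total weight `Σ_{e ∈ δ(S)} x_e` (rational weights) of the cut of `S`. -/
noncomputable def cutSumQ {n : ℕ} (x : Sym2 (Fin n) → ℚ) (S : Finset (Fin n)) : ℚ :=
  ∑ e ∈ Finset.univ.filter (fun e => InCut S e), x e

/-- Feasibility for the subtour elimination LP on `K_n`, for rational weights. -/
def SubtourLPFeasibleQ {n : ℕ} (x : Sym2 (Fin n) → ℚ) : Prop :=
  (∀ e : Sym2 (Fin n), ¬ e.IsDiag → 0 ≤ x e ∧ x e ≤ 1) ∧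
  (∀ v : Fin n, cutSumQ x {v} = 2) ∧
  (∀ S : Finset (Fin n), S.Nonempty → S ≠ Finset.univ → 2 ≤ cutSumQ x S)

/-- The aggregate weight of spanning trees, `Σ_{T ∈ 𝒯_n} ∏_{e ∈ T} x_e`. -/
noncomputable def treeWeightQ {n : ℕ} (x : Sym2 (Fin n) → ℚ) : ℚ :=
  ∑ T ∈ Finset.univ.filter (fun T : Finset (Sym2 (Fin n)) => IsSpanningTreeEdgeSet T),
    ∏ e ∈ T, x e

noncomputable section

/-! ### Cuts and splitting off a vertex -/

/-- `Σ_{i ∈ S} Σ_{j ∉ S} x_{ij}`, the weight of the cut of `S` for weights on an arbitrary finite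
vertex type. -/
def cutWt {W : Type} [Fintype W] (x : Sym2 W → ℝ) (S : Finset W) : ℝ :=
  ∑ i ∈ S, ∑ j ∈ Sᶜ, x s(i, j)

/-- `Σ_{i ∈ S} Σ_{j ∈ S} y_{ij}`: an edge inside `S` counts twice, a loop once. -/
def innerWt {W : Type} (y : Sym2 W → ℝ) (S : Finset W) : ℝ :=
  ∑ i ∈ S, ∑ j ∈ S, y s(i, j)

lemma cutWt_add {W : Type} [Fintype W] (x y : Sym2 W → ℝ) (S : Finset W) :
    cutWt (x + y) S = cutWt x S + cutWt y S := by
  simp [cutWt, Finset.sum_add_distrib]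

lemma innerWt_add {W : Type} (x y : Sym2 W → ℝ) (S : Finset W) :
    innerWt (x + y) S = innerWt x S + innerWt y S := by
  simp [innerWt, Finset.sum_add_distrib]

lemma inner_add_cut {W : Type} [Fintype W] (y : Sym2 W → ℝ) (S : Finset W) :
    innerWt y S + cutWt y S = ∑ i ∈ S, ∑ j, y s(i, j) := by
  rw [innerWt, cutWt, ← Finset.sum_add_distrib]
  exact Finset.sum_congr rfl fun i _ => Finset.sum_add_sum_compl _ _

lemma two_cutWt {W : Type} [Fintype W] (x : Sym2 W → ℝ) (S : Finset W) :
    2 * cutWt x S = ∑ i, ∑ j, if (i ∈ S ↔ j ∈ S) then 0 else x s(i, j) := by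
  have h1 : cutWt x S = ∑ i, ∑ j, if (i ∈ S ∧ j ∉ S) then x s(i, j) else 0 := by
    rw [cutWt, ← Finset.sum_filter_add_sum_filter_not Finset.univ (· ∈ S)]
    simp only [Finset.filter_mem_eq_inter, Finset.univ_inter]
    rw [Finset.sum_eq_zero (s := Finset.filter _ _), add_zero]
    · refine Finset.sum_congr rfl fun i hi => ?_
      simp only [hi, true_and, ← Finset.sum_filter]
      refine Finset.sum_congr ?_ fun _ _ => rfl
      ext j; simp
    · intro i hi
      simp only [Finset.mem_filter] at hi
      simp [hi.2]
  have h2 : cutWt x S = ∑ i, ∑ j, if (j ∈ S ∧ i ∉ S) then x s(i, j) else 0 := by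
    rw [h1, Finset.sum_comm]
    simp only [Sym2.eq_swap]
  rw [two_mul]
  nth_rewrite 1 [h1]
  rw [h2, ← Finset.sum_add_distrib]
  refine Finset.sum_congr rfl fun i _ => ?_
  rw [← Finset.sum_add_distrib]
  refine Finset.sum_congr rfl fun j _ => ?_
  by_cases hi : i ∈ S <;> by_cases hj : j ∈ S <;> simp [hi, hj]

lemma cutWt_compl {W : Type} [Fintype W] (x : Sym2 W → ℝ) (S : Finset W) :
    cutWt x Sᶜ = cutWt x S := by
  have := two_cutWt x S
  have := two_cutWt x Sᶜ
  simp only [Finset.mem_compl, not_iff_not] at this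
  linarith

/-- Posimodularity of the cut function. -/
lemma cutWt_posimodular {W : Type} [Fintype W] {x : Sym2 W → ℝ} (hx : ∀ e, 0 ≤ x e)
    (X Y : Finset W) : cutWt x (X \ Y) + cutWt x (Y \ X) ≤ cutWt x X + cutWt x Y := by
  have : 2 * cutWt x (X \ Y) + 2 * cutWt x (Y \ X) ≤ 2 * cutWt x X + 2 * cutWt x Y := by
    simp only [two_cutWt, ← Finset.sum_add_distrib]
    refine Finset.sum_le_sum fun i _ => Finset.sum_le_sum fun j _ => ?_
    have := hx s(i, j)
    by_cases h1 : i ∈ X <;> by_cases h2 : j ∈ X <;> by_cases h3 : i ∈ Y <;>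
      by_cases h4 : j ∈ Y <;> simp [h1, h2, h3, h4, this]
  linarith

/-- Lovász's splitting lemma: here `c` are the weights on `W` and `β i` is the weight between `i` and
an extra vertex. If every pair `{u, w}` with `β w > 0` lay in a tight set (a proper set whose cut
has weight `2`), posimodularity would make the tight sets through `u` a chain, whose largest member
`M` contains the support of `β`; then the cut of the complement of `M` is too light. -/
lemma exists_splittable {W : Type} [Fintype W] {c : Sym2 W → ℝ} (hc : ∀ e, 0 ≤ c e)
    {β : W → ℝ} (hβ : ∀ i, 0 ≤ β i) (hdeg : ∀ i, cutWt c {i} + β i ≤ 2)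
    (hcut : ∀ S : Finset W, S.Nonempty → S ≠ Finset.univ → 2 ≤ cutWt c S + ∑ i ∈ S, β i)
    (hW : ∀ i : W, ({i} : Finset W) ≠ Finset.univ) {u : W} (hu : 0 < β u) :
    ∃ w, u ≠ w ∧ 0 < β w ∧ ∀ S : Finset W, S ≠ Finset.univ → u ∈ S → w ∈ S →
      2 < cutWt c S + ∑ i ∈ S, β i := by
  by_contra! hno
  have hex : ∀ w, 0 < β w → ∃ S : Finset W, S ≠ Finset.univ ∧ u ∈ S ∧ w ∈ S ∧
      cutWt c S + ∑ i ∈ S, β i ≤ 2 := by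
    intro w hw
    by_cases huw : u = w
    · subst huw
      exact ⟨{u}, hW u, by simp, by simp, by simpa using hdeg u⟩
    · exact hno w huw hw
  let tight := Finset.univ.filter (fun S : Finset W => S ≠ Finset.univ ∧ u ∈ S ∧
      cutWt c S + ∑ i ∈ S, β i ≤ 2)
  have hne : tight.Nonempty := by
    obtain ⟨S, h1, h2, -, h4⟩ := hex u hu
    exact ⟨S, by simp [tight, h1, h2, h4]⟩
  obtain ⟨M, hM, hmax⟩ := Finset.exists_max_image tight Finset.card hne
  have hM' : M ≠ Finset.univ ∧ u ∈ M ∧ cutWt c M + ∑ i ∈ M, β i ≤ 2 := by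
    simpa [tight] using hM
  obtain ⟨hM1, hM2, hM3⟩ := hM'
  have hsupp : ∀ w, 0 < β w → w ∈ M := by
    intro w hw
    obtain ⟨X, h1, h2, h3, h4⟩ := hex w hw
    have hXM := hmax X (by simp [tight, h1, h2, h4])
    by_contra hwM
    have hne1 : (X \ M).Nonempty := ⟨w, by simp [h3, hwM]⟩
    have hne2 : (M \ X).Nonempty := by
      rw [Finset.sdiff_nonempty]
      intro hsub
      exact hwM ((Finset.eq_of_subset_of_card_le hsub hXM) ▸ h3)
    have e1 := hcut _ hne1 (by
      intro h
      have : u ∈ X \ M := h ▸ Finset.mem_univ u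
      simp [hM2] at this)
    have e2 := hcut _ hne2 (by
      intro h
      have : u ∈ M \ X := h ▸ Finset.mem_univ u
      simp [h2] at this)
    have e3 := cutWt_posimodular hc X M
    have e4 := Finset.sum_inter_add_sum_sdiff X M β
    have e5 := Finset.sum_inter_add_sum_sdiff M X β
    have e6 : β u ≤ ∑ i ∈ X ∩ M, β i :=
      Finset.single_le_sum (fun i _ => hβ i) (by simp [h2, hM2])
    rw [Finset.inter_comm] at e5
    linarith
  have hz : ∑ i ∈ Mᶜ, β i = 0 := by
    refine Finset.sum_eq_zero fun i hi => ?_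
    by_contra h
    exact (Finset.mem_compl.1 hi) (hsupp i (lt_of_le_of_ne (hβ i) (Ne.symm h)))
  have e1 := hcut Mᶜ (by
      rwa [Finset.nonempty_iff_ne_empty, ne_eq, Finset.compl_eq_empty_iff])
    (by intro h; have : u ∈ Mᶜ := h ▸ Finset.mem_univ u; simp [hM2] at this)
  rw [cutWt_compl, hz] at e1
  have e2 : β u ≤ ∑ i ∈ M, β i := Finset.single_le_sum (fun i _ => hβ i) hM2
  linarith

lemma single_mk {W : Type} {u w : W} (huw : u ≠ w) (ε : ℝ) (i j : W) :
    (Pi.single s(u, w) ε : Sym2 W → ℝ) s(i, j)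
      = (if i = u then if j = w then ε else 0 else 0) +
        (if i = w then if j = u then ε else 0 else 0) := by
  rw [Pi.single_apply]
  by_cases h1 : i = u <;> by_cases h2 : j = w <;> by_cases h3 : i = w <;> by_cases h4 : j = u <;>
    simp_all

lemma innerWt_single {W : Type} {u w : W} (huw : u ≠ w) (ε : ℝ) (S : Finset W) :
    innerWt (Pi.single s(u, w) ε) S = if u ∈ S ∧ w ∈ S then 2 * ε else 0 := by
  simp only [innerWt, single_mk huw, Finset.sum_add_distrib]
  by_cases h1 : u ∈ S <;> by_cases h2 : w ∈ S <;> simp [h1, h2, two_mul]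

lemma row_single {W : Type} [Fintype W] {u w : W} (huw : u ≠ w) (ε : ℝ) (i : W) :
    ∑ j, (Pi.single s(u, w) ε : Sym2 W → ℝ) s(i, j) = if i = u ∨ i = w then ε else 0 := by
  simp only [single_mk huw, Finset.sum_add_distrib]
  by_cases h1 : i = u <;> by_cases h2 : i = w <;> simp_all

/-- Complete splitting off, fractional form. A vertex joined to `i : W` with weight `b i` is
removed and its edges are replaced by weights `y` between its neighbours, keeping every cut at
least `2`. The weights `y` come from maximising the total weight split off. -/
lemma exists_splitting {W : Type} [Fintype W] {a : Sym2 W → ℝ} (ha : ∀ e, 0 ≤ a e)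
    {b : W → ℝ} (hb : ∀ i, 0 ≤ b i) (hdeg : ∀ i, cutWt a {i} + b i ≤ 2)
    (hcut : ∀ S : Finset W, S.Nonempty → S ≠ Finset.univ → 2 ≤ cutWt a S + ∑ i ∈ S, b i) :
    ∃ y : Sym2 W → ℝ, (∀ e, 0 ≤ y e) ∧ (∀ i, ∑ j, y s(i, j) ≤ b i) ∧
      ∀ S : Finset W, S.Nonempty → S ≠ Finset.univ → 2 ≤ cutWt (a + y) S := by
  by_cases hW : ∀ i : W, ({i} : Finset W) ≠ Finset.univ
  swap
  · push Not at hW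
    obtain ⟨i, hi⟩ := hW
    refine ⟨0, by simp, by simpa using hb, fun S hS hS' => absurd ?_ hS'⟩
    rw [← hi]
    have : S ⊆ {i} := hi ▸ Finset.subset_univ S
    exact (Finset.subset_singleton_iff.1 this).resolve_left hS.ne_empty
  -- With residual weights `b i - ∑ j, y s(i, j)` at the removed vertex, the cut of `S` has weight
  -- `cutWt a S + ∑ i ∈ S, b i - innerWt y S`.
  let K : Set (Sym2 W → ℝ) := {y | (∀ e, 0 ≤ y e) ∧ (∀ i, ∑ j, y s(i, j) ≤ b i) ∧
    ∀ S : Finset W, S.Nonempty → S ≠ Finset.univ →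
      innerWt y S ≤ cutWt a S + ∑ i ∈ S, b i - 2}
  have hcontI : ∀ S : Finset W, Continuous fun y : Sym2 W → ℝ => innerWt y S := by
    intro S; unfold innerWt; fun_prop
  have hclosed : IsClosed K := by
    refine IsClosed.inter ?_ (IsClosed.inter ?_ ?_)
    · have : {y : Sym2 W → ℝ | ∀ e, 0 ≤ y e} = ⋂ e, {y | 0 ≤ y e} := by ext; simp
      exact (congrArg IsClosed this).mpr
        (isClosed_iInter fun e => isClosed_le continuous_const (continuous_apply e))
    · have : {y : Sym2 W → ℝ | ∀ i, ∑ j, y s(i, j) ≤ b i} = ⋂ i, {y | ∑ j, y s(i, j) ≤ b i} := by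
        ext; simp
      exact (congrArg IsClosed this).mpr (isClosed_iInter fun i => isClosed_le (by fun_prop) continuous_const)
    · have : {y : Sym2 W → ℝ | ∀ S : Finset W, S.Nonempty → S ≠ Finset.univ →
          innerWt y S ≤ cutWt a S + ∑ i ∈ S, b i - 2} = ⋂ (S : Finset W) (_ : S.Nonempty)
            (_ : S ≠ Finset.univ), {y | innerWt y S ≤ cutWt a S + ∑ i ∈ S, b i - 2} := by
        ext; simp
      exact (congrArg IsClosed this).mpr
        (isClosed_iInter fun S => isClosed_iInter fun _ => isClosed_iInter fun _ =>
          isClosed_le (hcontI S) continuous_const)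
  have hbdd : K ⊆ Set.Icc 0 (fun _ => ∑ i, b i) := by
    rintro y ⟨h1, h2, -⟩
    refine ⟨h1, fun e => ?_⟩
    induction e with
    | _ i j =>
      calc y s(i, j) ≤ ∑ j, y s(i, j) :=
            Finset.single_le_sum (f := fun j => y s(i, j)) (fun j _ => h1 _) (Finset.mem_univ j)
        _ ≤ b i := h2 i
        _ ≤ ∑ i, b i := Finset.single_le_sum (fun i _ => hb i) (Finset.mem_univ i)
  have hcomp : IsCompact K := isCompact_Icc.of_isClosed_subset hclosed hbdd
  have hne : K.Nonempty := by
    refine ⟨0, by simp, by simpa using hb, fun S h1 h2 => ?_⟩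
    have := hcut S h1 h2
    simp only [innerWt, Pi.zero_apply, Finset.sum_const_zero]
    linarith
  obtain ⟨y, ⟨hy1, hy2, hy3⟩, hmax⟩ :=
    hcomp.exists_isMaxOn hne (hcontI Finset.univ).continuousOn
  have hid : ∀ S : Finset W, cutWt (a + y) S + ∑ i ∈ S, (b i - ∑ j, y s(i, j)) =
      cutWt a S + ∑ i ∈ S, b i - innerWt y S := by
    intro S
    rw [cutWt_add, Finset.sum_sub_distrib, ← inner_add_cut]
    ring
  refine ⟨y, hy1, hy2, fun S hS hS' => ?_⟩
  have hzero : ∀ i, b i - ∑ j, y s(i, j) = 0 := by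
    by_contra! hu
    obtain ⟨u, hu⟩ := hu
    have hu' : 0 < b u - ∑ j, y s(u, j) :=
      lt_of_le_of_ne (sub_nonneg.2 (hy2 u)) (Ne.symm hu)
    obtain ⟨w, huw, hw, htight⟩ := exists_splittable (c := a + y)
      (fun e => add_nonneg (ha e) (hy1 e)) (β := fun i => b i - ∑ j, y s(i, j))
      (fun i => sub_nonneg.2 (hy2 i))
      (fun i => by
        have h1 := hid {i}
        have h2 := hdeg i
        simp only [Finset.sum_singleton] at h1
        have h3 : 0 ≤ innerWt y {i} := by simp [innerWt, hy1]
        linarith)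
      (fun S h1 h2 => by
        have h3 := hid S
        have h4 := hy3 S h1 h2
        linarith) hW hu'
    obtain ⟨ε, hε, hεu, hεw, hεS⟩ : ∃ ε : ℝ, 0 < ε ∧ ε ≤ b u - ∑ j, y s(u, j) ∧
        ε ≤ b w - ∑ j, y s(w, j) ∧ ∀ S : Finset W, S ≠ Finset.univ → u ∈ S → w ∈ S →
          2 * ε ≤ cutWt a S + ∑ i ∈ S, b i - innerWt y S - 2 := by
      have hev : ∀ᶠ ε : ℝ in nhdsWithin 0 (Set.Ioi 0), ∀ S : Finset W, S ≠ Finset.univ → u ∈ S →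
          w ∈ S → 2 * ε ≤ cutWt a S + ∑ i ∈ S, b i - innerWt y S - 2 := by
        rw [Filter.eventually_all]
        intro S
        by_cases h : S ≠ Finset.univ ∧ u ∈ S ∧ w ∈ S
        · have h1 := htight S h.1 h.2.1 h.2.2
          rw [hid S] at h1
          filter_upwards [Ioc_mem_nhdsGT (show (0 : ℝ) <
            (cutWt a S + ∑ i ∈ S, b i - innerWt y S - 2) / 2 by linarith)] with ε hε _ _ _
          linarith [hε.2]
        · exact Filter.Eventually.of_forall fun ε h1 h2 h3 => absurd ⟨h1, h2, h3⟩ h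
      obtain ⟨ε, h1, h2, h3⟩ := (hev.and ((Filter.Eventually.and (Ioc_mem_nhdsGT hu')
        (Ioc_mem_nhdsGT hw)))).exists
      exact ⟨ε, h2.1, h2.2, h3.2, h1⟩
    have hmem : y + Pi.single s(u, w) ε ∈ K := by
      refine ⟨fun e => add_nonneg (hy1 e) ?_, fun i => ?_, fun S h1 h2 => ?_⟩
      · rw [Pi.single_apply]; split_ifs <;> linarith
      · simp only [Pi.add_apply, Finset.sum_add_distrib, row_single huw]
        have := hy2 i
        split_ifs with h
        · rcases h with rfl | rfl <;> linarith
        · linarith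
      · rw [innerWt_add, innerWt_single huw]
        have := hy3 S h1 h2
        split_ifs with h
        · linarith [hεS S h2 h.1 h.2]
        · linarith
    have := hmax hmem
    simp only [Set.mem_ofPred_eq, innerWt_add, innerWt_single huw, Finset.mem_univ, and_self,
      if_true] at this
    linarith
  have h1 := hid S
  have h2 := hy3 S hS hS'
  rw [Finset.sum_eq_zero fun i _ => hzero i] at h1
  linarith

/-! ### Spanning trees as parent functions -/

/-- The edge sets of spanning trees of the complete graph on `V`. -/
def treeSet (V : Type) [Fintype V] : Finset (Finset (Sym2 V)) :=
  Finset.univ.filter fun T => (∀ e ∈ T, ¬ e.IsDiag) ∧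
    (SimpleGraph.fromEdgeSet (↑T : Set (Sym2 V))).IsTree

lemma mem_treeSet {V : Type} [Fintype V] {T : Finset (Sym2 V)} : T ∈ treeSet V ↔
    (∀ e ∈ T, ¬ e.IsDiag) ∧ (SimpleGraph.fromEdgeSet (↑T : Set (Sym2 V))).IsTree := by
  rw [treeSet, Finset.mem_filter_univ]

/-- The parent functions of spanning trees rooted at `v`: every other vertex is sent to a
vertex of smaller rank, for some rank function. -/
def parentFns {V : Type} [Fintype V] (v : V) : Finset ({i // i ≠ v} → V) :=
  Finset.univ.filter fun h => ∃ d : V → ℕ, ∀ i, d (h i) < d i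

/-- The edge set `{i, h i}`, `i ≠ v`, of a parent function `h` with root `v`. -/
def parentEdges {V : Type} [Fintype V] {v : V} (h : {i // i ≠ v} → V) : Finset (Sym2 V) :=
  Finset.univ.image fun i => s(i.1, h i)

lemma parent_injective {V : Type} [Fintype V] {v : V} {h : {i // i ≠ v} → V}
    (hh : h ∈ parentFns v) : Function.Injective fun i : {i // i ≠ v} => s(i.1, h i) := by
  obtain ⟨d, hd⟩ := (Finset.mem_filter.1 hh).2
  intro i j hij
  rcases Sym2.eq_iff.1 hij with ⟨h1, -⟩ | ⟨h1, h2⟩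
  · exact Subtype.ext h1
  · have := hd i
    have := hd j
    simp only [h1, h2] at *
    omega

lemma parentEdges_mem_treeSet {V : Type} [Fintype V] {v : V} {h : {i // i ≠ v} → V}
    (hh : h ∈ parentFns v) : parentEdges h ∈ treeSet V := by
  have hinj := parent_injective hh
  obtain ⟨d, hd⟩ := (Finset.mem_filter.1 hh).2
  have hnd : ∀ e ∈ parentEdges h, ¬ e.IsDiag := by
    intro e he
    obtain ⟨i, -, rfl⟩ := Finset.mem_image.1 he
    intro hdiag
    have h1 : i.1 = h i := by simpa using hdiag
    have h2 := hd i
    rw [← h1] at h2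
    exact lt_irrefl _ h2
  refine mem_treeSet.2 ⟨hnd, ?_⟩
  rw [SimpleGraph.isTree_iff_connected_and_card]
  constructor
  · have hreach : ∀ k, ∀ i : V, d i ≤ k →
        (SimpleGraph.fromEdgeSet (↑(parentEdges h) : Set (Sym2 V))).Reachable i v := by
      intro k
      induction k with
      | zero =>
        intro i hi
        by_cases hiv : i = v
        · rw [hiv]
        · have := hd ⟨i, hiv⟩
          simp only at this
          omega
      | succ k ih =>
        intro i hi
        by_cases hiv : i = v
        · rw [hiv]
        · have h1 := hd ⟨i, hiv⟩
          simp only at h1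
          refine SimpleGraph.Reachable.trans (SimpleGraph.Adj.reachable ?_)
            (ih (h ⟨i, hiv⟩) (by omega))
          rw [SimpleGraph.fromEdgeSet_adj]
          have hmem : s(i, h ⟨i, hiv⟩) ∈ parentEdges h :=
            Finset.mem_image.2 ⟨⟨i, hiv⟩, Finset.mem_univ _, rfl⟩
          exact ⟨hmem, by simpa using hnd _ hmem⟩
    have : Nonempty V := ⟨v⟩
    exact SimpleGraph.Connected.mk fun i j => (hreach _ i le_rfl).trans (hreach _ j le_rfl).symm
  · have h1 : (SimpleGraph.fromEdgeSet (↑(parentEdges h) : Set (Sym2 V))).edgeSet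
        = ↑(parentEdges h) := by
      rw [SimpleGraph.edgeSet_fromEdgeSet]
      ext e
      simp only [Set.mem_sdiff, Finset.mem_coe, Sym2.mem_diagSet, and_iff_left_iff_imp]
      exact hnd e
    rw [h1, Nat.card_coe_set_eq, Set.ncard_coe_finset, parentEdges,
      Finset.card_image_of_injective _ hinj, Finset.card_univ, Nat.card_eq_fintype_card]
    have := Fintype.card_subtype_compl (fun i : V => i = v)
    have h2 : 0 < Fintype.card V := Fintype.card_pos_iff.2 ⟨v⟩
    simp only [Fintype.card_subtype_eq] at this
    rw [this]
    omega

lemma card_of_mem_treeSet {V : Type} [Fintype V] {T : Finset (Sym2 V)} (hT : T ∈ treeSet V) :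
    T.card + 1 = Fintype.card V := by
  obtain ⟨hnd, htree⟩ := mem_treeSet.1 hT
  have h1 : (SimpleGraph.fromEdgeSet (↑T : Set (Sym2 V))).edgeSet = ↑T := by
    rw [SimpleGraph.edgeSet_fromEdgeSet]
    ext e
    simp only [Set.mem_sdiff, Finset.mem_coe, Sym2.mem_diagSet, and_iff_left_iff_imp]
    exact hnd e
  have := (SimpleGraph.isTree_iff_connected_and_card.1 htree).2
  rwa [h1, Nat.card_coe_set_eq, Set.ncard_coe_finset, Nat.card_eq_fintype_card] at this

/-- If the parent functions `h ≠ h'` gave the same tree and `h i ≠ h' i`, then `h'` would send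
`h i` to `i`, so they would differ at `h i` too; the walk `i, h i, h (h i), …` would never reach
the root. -/
lemma parentEdges_injOn {V : Type} [Fintype V] (v : V) :
    Set.InjOn (parentEdges (v := v)) (parentFns v) := by
  intro h hh h' hh' heq
  obtain ⟨d, hd⟩ := (Finset.mem_filter.1 hh).2
  suffices ∀ k, ∀ i : {i // i ≠ v}, d i ≤ k → h i = h' i from funext fun i => this _ i le_rfl
  intro k
  induction k with
  | zero => intro i hi; have := hd i; omega
  | succ k ih =>
    intro i hi
    have h1 : s(i.1, h i) ∈ parentEdges h' := by
      rw [← heq]; exact Finset.mem_image.2 ⟨i, Finset.mem_univ _, rfl⟩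
    obtain ⟨j, -, hj⟩ := Finset.mem_image.1 h1
    rcases Sym2.eq_iff.1 hj with ⟨e1, e2⟩ | ⟨e1, e2⟩
    · rw [← e2, Subtype.ext e1]
    -- Here `j` is the parent of `i` under `h`, and `i` is the parent of `j` under `h'`.
    · have h2 := hd i
      rw [← e1] at h2
      have h3 := ih j (by omega)
      have h4 := hd j
      rw [h3, e2] at h4
      omega

lemma exists_parentFn {V : Type} [Fintype V] (v : V) {T : Finset (Sym2 V)} (hT : T ∈ treeSet V) :
    ∃ h ∈ parentFns v, parentEdges h = T := by
  obtain ⟨hnd, htree⟩ := mem_treeSet.1 hT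
  set G := SimpleGraph.fromEdgeSet (↑T : Set (Sym2 V)) with hG
  have hstep : ∀ i : {i // i ≠ v}, ∃ j, G.Adj i j ∧ G.dist j v < G.dist i v := by
    rintro ⟨i, hi⟩
    obtain ⟨p, hp⟩ := htree.connected.exists_walk_length_eq_dist i v
    cases p with
    | nil => exact absurd rfl hi
    | cons hadj q =>
      refine ⟨_, hadj, ?_⟩
      have := G.dist_le q
      rw [SimpleGraph.Walk.length_cons] at hp
      simp only
      omega
  choose h hadj hdist using hstep
  have hh : h ∈ parentFns v :=
    Finset.mem_filter.2 ⟨Finset.mem_univ _, fun i => G.dist i v, hdist⟩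
  refine ⟨h, hh, Finset.eq_of_subset_of_card_le ?_ ?_⟩
  · intro e he
    obtain ⟨i, -, rfl⟩ := Finset.mem_image.1 he
    have := hadj i
    rw [hG, SimpleGraph.fromEdgeSet_adj] at this
    exact this.1
  · have h1 := card_of_mem_treeSet hT
    have h2 := card_of_mem_treeSet (parentEdges_mem_treeSet hh)
    omega

lemma sum_treeSet {V : Type} [Fintype V] (v : V) (φ : Finset (Sym2 V) → ℝ) :
    ∑ T ∈ treeSet V, φ T = ∑ h ∈ parentFns v, φ (parentEdges h) := by
  symm
  exact Finset.sum_nbij parentEdges (fun h hh => parentEdges_mem_treeSet hh) (parentEdges_injOn v)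
    (fun T hT => by simpa using exists_parentFn v hT) (fun _ _ => rfl)

lemma prod_parentEdges {V : Type} [Fintype V] {v : V} {h : {i // i ≠ v} → V}
    (hh : h ∈ parentFns v) (x : Sym2 V → ℝ) :
    ∏ e ∈ parentEdges h, x e = ∏ i, x s(i.1, h i) :=
  Finset.prod_image (parent_injective hh).injOn

lemma degree_parentEdges {V : Type} [Fintype V] {v : V} {h : {i // i ≠ v} → V}
    (hh : h ∈ parentFns v) :
    ((parentEdges h).filter (v ∈ ·)).card = (Finset.univ.filter fun i => h i = v).card := by
  rw [parentEdges, Finset.filter_image, Finset.card_image_of_injective _ (parent_injective hh)]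
  congr 1
  ext i
  have := i.2
  simp only [Finset.mem_filter, Finset.mem_univ, true_and, Sym2.mem_iff]
  grind

/-- Handshake: the degrees of a spanning tree sum to `2 (|V| - 1)`. -/
lemma sum_degree {V : Type} [Fintype V] {T : Finset (Sym2 V)} (hT : T ∈ treeSet V) :
    ∑ v : V, ((T.filter (v ∈ ·)).card : ℝ) = 2 * (Fintype.card V - 1) := by
  have h1 := card_of_mem_treeSet hT
  obtain ⟨hnd, -⟩ := mem_treeSet.1 hT
  have h2 : ∑ v : V, (T.filter (v ∈ ·)).card = 2 * T.card := by
    simp only [Finset.card_filter]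
    rw [Finset.sum_comm, Finset.sum_congr rfl (g := fun _ => 2), Finset.sum_const, smul_eq_mul,
      mul_comm]
    intro e he
    rw [← Finset.card_filter, ← Sym2.card_toFinset_of_not_isDiag e (hnd e he)]
    congr 1
    ext i
    simp
  rw [← h1]
  push_cast
  rw [add_sub_cancel_right]
  exact_mod_cast h2

/-! ### Trees of the split graph -/

/-- The vertex set with `v` removed carries `a = x` restricted plus new weights `y` whose row sums
are at most `x s(i, v)`. A tree there rooted at `ρ`, with each edge to the parent marked as an
`a`-edge or a `y`-edge, becomes a tree rooted at `v` by redirecting `ρ` and the marked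
vertices to `v`; the forgotten `y`-parents sum to at most `x s(i, v)` for each redirected `i`. -/
lemma rooted_step {V : Type} [Fintype V] {v : V} {x : Sym2 V → ℝ} (hx : ∀ e, 0 ≤ x e)
    {y : Sym2 {i // i ≠ v} → ℝ} (hy : ∀ e, 0 ≤ y e)
    (hrow : ∀ i, ∑ j, y s(i, j) ≤ x s(i.1, v)) (ρ : {i // i ≠ v}) :
    x s(ρ.1, v) * ∑ f ∈ parentFns ρ, ∏ i, (x s(i.1.1, (f i).1) + y s(i.1, f i)) ≤
      ∑ h ∈ (parentFns v).filter (fun h => h ρ = v), ∏ i, x s(i.1, h i) := by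
  -- `wt i (j, t)` is the weight of the edge from `i` to its parent `j`; `t` marks `y`-edges.
  let wt : {i : {i // i ≠ v} // i ≠ ρ} → {i // i ≠ v} × Bool → ℝ := fun i p =>
    if p.2 then y s(i.1, p.1) else x s(i.1.1, p.1.1)
  let redirect : {i // i ≠ v} × Bool → V := fun p => if p.2 then v else p.1.1
  let K := Finset.univ.filter fun k : {i : {i // i ≠ v} // i ≠ ρ} → {i // i ≠ v} × Bool =>
    (fun i => (k i).1) ∈ parentFns ρ
  let H : ({i : {i // i ≠ v} // i ≠ ρ} → {i // i ≠ v} × Bool) → {i // i ≠ v} → V := fun k i =>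
    if hi : i = ρ then v else redirect (k ⟨i, hi⟩)
  have hwt : ∀ i p, 0 ≤ wt i p := by
    intro i p
    simp only [wt]
    split_ifs
    · exact hy _
    · exact hx _
  have hleft : ∑ f ∈ parentFns ρ, ∏ i, (x s(i.1.1, (f i).1) + y s(i.1, f i)) =
      ∑ k ∈ K, ∏ i, wt i (k i) := by
    rw [← Finset.sum_fiberwise_of_maps_to (s := K) (t := parentFns ρ)
      (g := fun k i => (k i).1) (fun k hk => (Finset.mem_filter.1 hk).2)]
    refine Finset.sum_congr rfl fun f hf => ?_
    have h1 : ∀ i, x s(i.1.1, (f i).1) + y s(i.1, f i) =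
        ∑ p ∈ ({f i} : Finset {i // i ≠ v}) ×ˢ (Finset.univ : Finset Bool), wt i p := by
      intro i
      rw [Finset.sum_product]
      simp [wt, add_comm]
    rw [Finset.prod_congr rfl fun i _ => h1 i, Finset.prod_univ_sum]
    refine Finset.sum_congr ?_ fun _ _ => rfl
    ext k
    simp only [Fintype.mem_piFinset, Finset.mem_product, Finset.mem_singleton, Finset.mem_univ,
      and_true, Finset.mem_filter, K, true_and]
    constructor
    · intro h
      have : (fun i => (k i).1) = f := funext h
      exact ⟨this ▸ hf, this⟩
    · rintro ⟨-, rfl⟩ i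
      rfl
  have hmaps : ∀ k ∈ K, H k ∈ (parentFns v).filter (fun h => h ρ = v) := by
    intro k hk
    obtain ⟨d, hd⟩ := (Finset.mem_filter.1 (Finset.mem_filter.1 hk).2).2
    refine Finset.mem_filter.2 ⟨Finset.mem_filter.2 ⟨Finset.mem_univ _,
      fun i => if hi : i = v then 0 else d ⟨i, hi⟩ + 1, fun i => ?_⟩, by simp [H]⟩
    by_cases hi : i = ρ
    · simp [H, hi, ρ.2]
    · have h1 := hd ⟨i, hi⟩
      cases ht : (k ⟨i, hi⟩).2
      · simpa [H, hi, i.2, redirect, ht, (k ⟨i, hi⟩).1.2] using h1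
      · simp [H, hi, i.2, redirect, ht]
  rw [hleft, ← Finset.sum_fiberwise_of_maps_to hmaps, Finset.mul_sum]
  refine Finset.sum_le_sum fun h hh => ?_
  have hρ := (Finset.mem_filter.1 hh).2
  rw [Fintype.prod_eq_mul_prod_subtype_ne _ ρ, hρ]
  refine mul_le_mul_of_nonneg_left ?_ (hx _)
  calc ∑ k ∈ K with H k = h, ∏ i, wt i (k i)
      ≤ ∑ k ∈ Fintype.piFinset (fun i : {i : {i // i ≠ v} // i ≠ ρ} =>
          Finset.univ.filter fun p => redirect p = h i.1), ∏ i, wt i (k i) := by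
        refine Finset.sum_le_sum_of_subset_of_nonneg ?_ fun k _ _ =>
          Finset.prod_nonneg fun i _ => hwt _ _
        intro k hk
        have hk' := (Finset.mem_filter.1 hk).2
        simp only [Fintype.mem_piFinset, Finset.mem_filter, Finset.mem_univ, true_and]
        intro i
        rw [← hk']
        simp [H, i.2]
    _ = ∏ i : {i : {i // i ≠ v} // i ≠ ρ}, ∑ p with redirect p = h i.1, wt i p :=
        (Finset.prod_univ_sum _ _).symm
    _ ≤ ∏ i : {i : {i // i ≠ v} // i ≠ ρ}, x s(i.1.1, h i.1) := by
        refine Finset.prod_le_prod (fun i _ => Finset.sum_nonneg fun p _ => hwt _ _) fun i _ => ?_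
        rw [Finset.sum_filter, Fintype.sum_prod_type]
        by_cases hv : h i.1 = v
        · rw [hv]
          refine le_trans (le_of_eq ?_) (hrow i.1)
          refine Finset.sum_congr rfl fun j _ => ?_
          simp [redirect, wt, j.2]
        · rw [Finset.sum_eq_single ⟨h i.1, hv⟩]
          · simp [redirect, wt, Ne.symm hv]
          · intro j _ hj
            have : j.1 ≠ h i.1 := fun hc => hj (Subtype.ext hc)
            simp [redirect, Ne.symm hv, this]
          · simp

/-- The total weight `Σ_T ∏_{e ∈ T} x_e` of the spanning trees of the complete graph on `V`. -/
def treeWt {V : Type} [Fintype V] (x : Sym2 V → ℝ) : ℝ :=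
  ∑ T ∈ treeSet V, ∏ e ∈ T, x e

/-- The sum of `rooted_step` over all roots `ρ`: the trees on `V` weighted by their degree at `v`
dominate the trees of the split graph weighted by the degree of `v`. -/
lemma degree_step {V : Type} [Fintype V] {v : V} {x : Sym2 V → ℝ} (hx : ∀ e, 0 ≤ x e)
    {y : Sym2 {i // i ≠ v} → ℝ} (hy : ∀ e, 0 ≤ y e)
    (hrow : ∀ i, ∑ j, y s(i, j) ≤ x s(i.1, v)) :
    (∑ i : {i // i ≠ v}, x s(i.1, v)) * treeWt ((fun e => x (e.map Subtype.val)) + y) ≤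
      ∑ T ∈ treeSet V, ((T.filter (v ∈ ·)).card : ℝ) * ∏ e ∈ T, x e := by
  rw [Finset.sum_mul]
  calc ∑ ρ : {i // i ≠ v}, x s(ρ.1, v) * treeWt ((fun e => x (e.map Subtype.val)) + y)
      ≤ ∑ ρ : {i // i ≠ v}, ∑ h ∈ (parentFns v).filter (fun h => h ρ = v),
          ∏ i, x s(i.1, h i) := by
        refine Finset.sum_le_sum fun ρ _ => le_trans (le_of_eq ?_) (rooted_step hx hy hrow ρ)
        rw [treeWt, sum_treeSet ρ]
        congr 1
        refine Finset.sum_congr rfl fun f hf => ?_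
        rw [prod_parentEdges hf]
        exact Finset.prod_congr (by ext; simp) fun _ _ => rfl
    _ = ∑ T ∈ treeSet V, ((T.filter (v ∈ ·)).card : ℝ) * ∏ e ∈ T, x e := by
        rw [sum_treeSet v]
        simp only [Finset.sum_filter]
        rw [Finset.sum_comm]
        refine Finset.sum_congr rfl fun h hh => ?_
        rw [prod_parentEdges hh, degree_parentEdges hh, ← Finset.sum_filter, Finset.sum_const,
          nsmul_eq_mul]

/-! ### The induction -/

/-- The cut in `V` of a set `S` avoiding `v`, split into the edges avoiding `v` and those at `v`. -/
lemma cutWt_map_val {V : Type} [Fintype V] {v : V} (x : Sym2 V → ℝ) (S : Finset {i // i ≠ v}) :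
    cutWt x (S.map (Function.Embedding.subtype _)) =
      cutWt (fun e => x (e.map Subtype.val)) S + ∑ i ∈ S, x s(i.1, v) := by
  have hc : (S.map (Function.Embedding.subtype (· ≠ v)))ᶜ =
      insert v (Sᶜ.map (Function.Embedding.subtype (· ≠ v))) := by
    ext j
    by_cases hj : j = v
    · simp [hj]
    · simp [hj]
  rw [cutWt, hc, Finset.sum_map, cutWt, ← Finset.sum_add_distrib]
  refine Finset.sum_congr rfl fun i _ => ?_
  rw [Finset.sum_insert (by simp), Finset.sum_map, add_comm]
  exact congrArg₂ _ (Finset.sum_congr (by ext; simp) fun _ _ => rfl) rfl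

/-- The bound `|V| ≤ treeWt x` for all weights with degrees at most `2` and cuts at least `2`, by
induction on `|V|`: each vertex `v` is split off, and the inequalities of `degree_step` are summed
over all `v`. -/
theorem card_le_treeWt : ∀ (n : ℕ) (V : Type) [Fintype V], Fintype.card V = n + 1 →
    ∀ x : Sym2 V → ℝ, (∀ e, 0 ≤ x e) → (∀ v, cutWt x {v} ≤ 2) →
    (∀ S : Finset V, S.Nonempty → S ≠ Finset.univ → 2 ≤ cutWt x S) →
    (n + 1 : ℝ) ≤ treeWt x := by
  intro n
  induction n with
  | zero =>
    intro V _ hV x _ _ _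
    obtain ⟨v, hv⟩ := Fintype.card_eq_one_iff.1 hV
    have hempty : IsEmpty {i // i ≠ v} := ⟨fun i => i.2 (hv i)⟩
    have huniv : parentFns v = Finset.univ := by
      simp [parentFns]
    rw [treeWt, sum_treeSet v, Finset.sum_congr rfl fun h hh => prod_parentEdges hh x, huniv]
    simp
  | succ n ih =>
    intro V _ hV x hx hdeg hcut
    have hstep : ∀ v : V, 2 * (n + 1 : ℝ) ≤
        ∑ T ∈ treeSet V, ((T.filter (v ∈ ·)).card : ℝ) * ∏ e ∈ T, x e := by
      intro v
      have hcardW : Fintype.card {i // i ≠ v} = n + 1 := by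
        have := Fintype.card_subtype_compl (fun i : V => i = v)
        simp only [Fintype.card_subtype_eq] at this
        rw [this, hV]
        rfl
      have hcutW : ∀ S : Finset {i // i ≠ v}, S.Nonempty →
          2 ≤ cutWt (fun e => x (e.map Subtype.val)) S + ∑ i ∈ S, x s(i.1, v) := by
        intro S hS
        rw [← cutWt_map_val]
        refine hcut _ (by simpa using hS) fun h => ?_
        have : v ∈ S.map (Function.Embedding.subtype (· ≠ v)) := h ▸ Finset.mem_univ v
        simp at this
      have hdegW : ∀ i : {i // i ≠ v},
          cutWt (fun e => x (e.map Subtype.val)) {i} + x s(i.1, v) ≤ 2 := by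
        intro i
        have h1 := cutWt_map_val x {i}
        have h2 := hdeg i.1
        simp only [Finset.map_singleton, Finset.sum_singleton,
          Function.Embedding.subtype_apply] at h1
        linarith
      obtain ⟨y, hy1, hy2, hy3⟩ := exists_splitting
        (a := fun e => x (e.map Subtype.val)) (fun e => hx _) (b := fun i => x s(i.1, v))
        (fun i => hx _) hdegW (fun S hS _ => hcutW S hS)
      have hIH := ih {i // i ≠ v} hcardW ((fun e => x (e.map Subtype.val)) + y)
        (fun e => add_nonneg (hx _) (hy1 e))
        (fun i => by
          have h1 := inner_add_cut y {i}
          have h2 : 0 ≤ innerWt y {i} := by simp [innerWt, hy1]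
          have h3 := hy2 i
          have h4 := hdegW i
          rw [Finset.sum_singleton] at h1
          rw [cutWt_add]
          linarith) hy3
      have htot : 2 ≤ ∑ i : {i // i ≠ v}, x s(i.1, v) := by
        have hne : (Finset.univ : Finset {i // i ≠ v}).Nonempty := by
          rw [← Finset.card_pos, Finset.card_univ, hcardW]
          omega
        have := hcutW Finset.univ hne
        simpa [cutWt] using this
      refine le_trans ?_ (degree_step hx hy1 hy2)
      exact mul_le_mul htot hIH (by positivity) (by linarith)
    have hsum := Finset.sum_le_sum fun (v : V) (_ : v ∈ Finset.univ) => hstep v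
    rw [Finset.sum_comm, Finset.sum_const, Finset.card_univ, hV, nsmul_eq_mul] at hsum
    have h2 : ∑ T ∈ treeSet V, ∑ v : V, ((T.filter (v ∈ ·)).card : ℝ) * ∏ e ∈ T, x e =
        2 * (n + 1 : ℝ) * treeWt x := by
      rw [treeWt, Finset.mul_sum]
      refine Finset.sum_congr rfl fun T hT => ?_
      rw [← Finset.sum_mul, sum_degree hT, hV]
      push_cast
      ring
    rw [h2] at hsum
    have hpos : (0 : ℝ) < 2 * (n + 1) := by positivity
    rw [mul_comm] at hsum
    exact_mod_cast le_of_mul_le_mul_left hsum hpos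

/-! ### Translation to the rational formulation -/

lemma cutSumQ_cast {n : ℕ} (x : Sym2 (Fin n) → ℚ) (S : Finset (Fin n)) :
    cutWt (fun e => if e.IsDiag then 0 else (x e : ℝ)) S = (cutSumQ x S : ℝ) := by
  rw [cutSumQ, cutWt, ← Finset.sum_product']
  push_cast
  refine Finset.sum_nbij (fun p => s(p.1, p.2)) ?_ ?_ ?_ ?_
  · rintro ⟨i, j⟩ h
    simp only [Finset.mem_product, Finset.mem_compl] at h
    exact Finset.mem_filter.2 ⟨Finset.mem_univ _, i, j, rfl, h.1, h.2⟩
  · rintro ⟨i, j⟩ h ⟨i', j'⟩ h' heq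
    simp only [Finset.coe_product, Set.mem_prod, Finset.mem_coe, Finset.mem_compl] at h h'
    rcases Sym2.eq_iff.1 heq with ⟨rfl, rfl⟩ | ⟨rfl, rfl⟩
    · rfl
    · exact absurd h.1 h'.2
  · intro e he
    obtain ⟨i, j, rfl, hi, hj⟩ := (Finset.mem_filter.1 he).2
    exact ⟨(i, j), by simp [hi, hj], rfl⟩
  · rintro ⟨i, j⟩ h
    simp only [Finset.mem_product, Finset.mem_compl] at h
    have : i ≠ j := fun hij => h.2 (hij ▸ h.1)
    simp [this]

lemma treeWeightQ_cast {n : ℕ} (x : Sym2 (Fin n) → ℚ) :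
    treeWt (fun e => if e.IsDiag then 0 else (x e : ℝ)) = (treeWeightQ x : ℝ) := by
  have hset : Finset.univ.filter
      (fun T : Finset (Sym2 (Fin n)) => IsSpanningTreeEdgeSet T) = treeSet (Fin n) := by
    ext T
    rw [mem_treeSet, Finset.mem_filter_univ, IsSpanningTreeEdgeSet]
  rw [treeWt, treeWeightQ, hset, Rat.cast_sum]
  refine Finset.sum_congr rfl fun T hT => ?_
  rw [Rat.cast_prod]
  refine Finset.prod_congr rfl fun e he => ?_
  have hnd : ¬ e.IsDiag := (mem_treeSet.1 hT).1 e he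
  simp only [hnd, if_false]

end

/-- Proposition 3.2: any rational feasible point of the subtour elimination LP on
`K_n` (`n ≥ 3`) has aggregate spanning-tree weight at least `n`. -/
theorem subtourLP_rational_implies_treeWeight_ge (n : ℕ) (hn : 3 ≤ n)
    (x : Sym2 (Fin n) → ℚ) (hx : SubtourLPFeasibleQ x) :
    (n : ℚ) ≤ treeWeightQ x := by
  obtain ⟨hbox, hdeg, hcut⟩ := hx
  obtain ⟨m, rfl⟩ : ∃ m, n = m + 1 := ⟨n - 1, by omega⟩
  have key := card_le_treeWt m (Fin (m + 1)) (by simp)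
    (fun e => if e.IsDiag then 0 else (x e : ℝ))
    (fun e => by
      split_ifs with h
      · exact le_rfl
      · exact_mod_cast (hbox e h).1)
    (fun v => by
      have h1 := cutSumQ_cast x {v}
      rw [hdeg v] at h1
      exact_mod_cast h1.le)
    (fun S h1 h2 => by
      rw [cutSumQ_cast]
      exact_mod_cast hcut S h1 h2)
  rw [treeWeightQ_cast] at key
  exact_mod_cast key
end
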